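/- arXiv:2310.11549 — 2 statements merged into one kernel-verified Lean document; each statement's English description precedes it below -/
import Mathlib

section
/- Let α ∈ ℝ, δ ∈ ℝ, and let u, v, g, w: ℝ² → ℝ (variables x,t) be smooth with g nowhere vanishing, satisfying for all (x,t): g_{xx} = 3(g_x² − w²)/(4g) − ug + δ, w_{xx} = g_x w_x/(2g) − w(g_x² − w²)/(8g²) − δw/(2g) − (u/2)w + (2α − 2v + u_x)g, together with g_t = 3w_x and w_t = −3g_x(g_x² − w²)/(8g²) + 3ww_x/(2g) − 3δg_x/(2g) − (3/2)u g_x + u_x g. Then p := 2g and q := g_x + w satisfy identically: (E1) p_{xxxx} + u p_{xx} + (2u_x − 3(v − α))p_x + (u_{xx} − 2v_x)p − 2q_{xxx} − 2u q_x − u_x q = 0; (E2) 2u p_{xxx} + 6(v − α)p_{xx} + 2(2v_x + u²)p_x + (v_{xx} + 2uu_x)p + q_{xxxx} + u q_{xx} + 3(2u_x − 3(v − α))q_x + (2u_{xx} − 3v_x)q = 0; and also p_t = −3p_{xx} + 6q_x and q_t = −2p_{xxx} + 3q_{xx} − 2u p_x. -/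
/-!
For a fixed `t`, (E1) and (E2) are differential algebra in `x`.  The system
expresses `g_xx` and `w_xx` rationally through lower derivatives, so differentiating it
(with denominators cleared) expresses `g_xxx, …, g_xxxxx` and `w_xxx, w_xxxx` through
`g, g_x, w, w_x` and the derivatives of `u, v`, and (E1), (E2) become rational identities:
`boussinesq_E1`, `boussinesq_E2`.  The equation for `p_t` is `g_t = 3 w_x` itself.  In the equation
for `q_t`, smoothness of `g` gives `(g_x)_t = (g_t)_x = 3 w_xx` (`pdt_pdx_comm`), and what is left is
`w_t = -g_xxx - 4 u g_x`, which is the given evolution of `w` after substituting `g_xxx`.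
-/

noncomputable section

/-- Partial derivative in the first variable (x). -/
def pdx (f : ℝ → ℝ → ℝ) : ℝ → ℝ → ℝ := fun x t => deriv (fun x' => f x' t) x

/-- Partial derivative in the second variable (t). -/
def pdt (f : ℝ → ℝ → ℝ) : ℝ → ℝ → ℝ := fun x t => deriv (fun t' => f x t') t

/-- The nonlocal variable `p = 2g`. -/
def pB (g : ℝ → ℝ → ℝ) : ℝ → ℝ → ℝ := fun x t => 2 * g x t

/-- The nonlocal variable `q = g_x + w`. -/
def qB (g w : ℝ → ℝ → ℝ) : ℝ → ℝ → ℝ := fun x t => pdx g x t + w x t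


/-! ### Differential consequences of the system -/

/-- The `x`-derivative of the equation for `g_xx` with denominators cleared.  A smooth function of
one variable is represented by the sequence of its derivatives (here and below). -/
theorem jet_g3 (δ : ℝ) (U G W : ℕ → ℝ → ℝ)
    (hU : ∀ n x, HasDerivAt (U n) (U (n + 1) x) x)
    (hG : ∀ n x, HasDerivAt (G n) (G (n + 1) x) x)
    (hW : ∀ n x, HasDerivAt (W n) (W (n + 1) x) x)
    (hA : ∀ x, 4 * (G 0 x * G 2 x) - 3 * (G 1 x * G 1 x - W 0 x * W 0 x)
      + 4 * (U 0 x * (G 0 x * G 0 x)) - 4 * δ * G 0 x = 0) (x : ℝ) :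
    4 * (G 0 x * G 3 x) - 2 * (G 1 x * G 2 x) + 6 * (W 0 x * W 1 x)
      + 4 * (U 1 x * (G 0 x * G 0 x)) + 8 * (U 0 x * (G 0 x * G 1 x)) - 4 * δ * G 1 x = 0 := by
  have h := (((((hG 0 x).fun_mul (hG 2 x)).const_mul 4).fun_sub
    ((((hG 1 x).fun_mul (hG 1 x)).fun_sub ((hW 0 x).fun_mul (hW 0 x))).const_mul 3)).fun_add
    (((hU 0 x).fun_mul ((hG 0 x).fun_mul (hG 0 x))).const_mul 4)).fun_sub ((hG 0 x).const_mul (4 * δ))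
  rw [funext hA] at h
  linear_combination h.unique (hasDerivAt_const x (0 : ℝ))

/-- The second `x`-derivative of the equation for `g_xx`. -/
theorem jet_g4 (δ : ℝ) (U G W : ℕ → ℝ → ℝ)
    (hU : ∀ n x, HasDerivAt (U n) (U (n + 1) x) x)
    (hG : ∀ n x, HasDerivAt (G n) (G (n + 1) x) x)
    (hW : ∀ n x, HasDerivAt (W n) (W (n + 1) x) x)
    (hA : ∀ x, 4 * (G 0 x * G 3 x) - 2 * (G 1 x * G 2 x) + 6 * (W 0 x * W 1 x)
      + 4 * (U 1 x * (G 0 x * G 0 x)) + 8 * (U 0 x * (G 0 x * G 1 x)) - 4 * δ * G 1 x = 0)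
    (x : ℝ) :
    4 * (G 0 x * G 4 x) + 2 * (G 1 x * G 3 x) - 2 * (G 2 x * G 2 x)
      + 6 * (W 1 x * W 1 x) + 6 * (W 0 x * W 2 x)
      + 4 * (U 2 x * (G 0 x * G 0 x)) + 16 * (U 1 x * (G 0 x * G 1 x))
      + 8 * (U 0 x * (G 1 x * G 1 x)) + 8 * (U 0 x * (G 0 x * G 2 x)) - 4 * δ * G 2 x = 0 := by
  have h := (((((((hG 0 x).fun_mul (hG 3 x)).const_mul 4).fun_sub
    (((hG 1 x).fun_mul (hG 2 x)).const_mul 2)).fun_add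
    (((hW 0 x).fun_mul (hW 1 x)).const_mul 6)).fun_add
    (((hU 1 x).fun_mul ((hG 0 x).fun_mul (hG 0 x))).const_mul 4)).fun_add
    (((hU 0 x).fun_mul ((hG 0 x).fun_mul (hG 1 x))).const_mul 8)).fun_sub
    ((hG 1 x).const_mul (4 * δ))
  rw [funext hA] at h
  linear_combination h.unique (hasDerivAt_const x (0 : ℝ))

/-- The third `x`-derivative of the equation for `g_xx`. -/
theorem jet_g5 (δ : ℝ) (U G W : ℕ → ℝ → ℝ)
    (hU : ∀ n x, HasDerivAt (U n) (U (n + 1) x) x)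
    (hG : ∀ n x, HasDerivAt (G n) (G (n + 1) x) x)
    (hW : ∀ n x, HasDerivAt (W n) (W (n + 1) x) x)
    (hA : ∀ x, 4 * (G 0 x * G 4 x) + 2 * (G 1 x * G 3 x) - 2 * (G 2 x * G 2 x)
      + 6 * (W 1 x * W 1 x) + 6 * (W 0 x * W 2 x)
      + 4 * (U 2 x * (G 0 x * G 0 x)) + 16 * (U 1 x * (G 0 x * G 1 x))
      + 8 * (U 0 x * (G 1 x * G 1 x)) + 8 * (U 0 x * (G 0 x * G 2 x)) - 4 * δ * G 2 x = 0)
    (x : ℝ) :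
    4 * (G 0 x * G 5 x) + 6 * (G 1 x * G 4 x) - 2 * (G 2 x * G 3 x)
      + 18 * (W 1 x * W 2 x) + 6 * (W 0 x * W 3 x)
      + 4 * (U 3 x * (G 0 x * G 0 x)) + 24 * (U 2 x * (G 0 x * G 1 x))
      + 24 * (U 1 x * (G 1 x * G 1 x)) + 24 * (U 1 x * (G 0 x * G 2 x))
      + 24 * (U 0 x * (G 1 x * G 2 x)) + 8 * (U 0 x * (G 0 x * G 3 x)) - 4 * δ * G 3 x = 0 := by
  have h := (((((((((((hG 0 x).fun_mul (hG 4 x)).const_mul 4).fun_add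
    (((hG 1 x).fun_mul (hG 3 x)).const_mul 2)).fun_sub
    (((hG 2 x).fun_mul (hG 2 x)).const_mul 2)).fun_add
    (((hW 1 x).fun_mul (hW 1 x)).const_mul 6)).fun_add
    (((hW 0 x).fun_mul (hW 2 x)).const_mul 6)).fun_add
    (((hU 2 x).fun_mul ((hG 0 x).fun_mul (hG 0 x))).const_mul 4)).fun_add
    (((hU 1 x).fun_mul ((hG 0 x).fun_mul (hG 1 x))).const_mul 16)).fun_add
    (((hU 0 x).fun_mul ((hG 1 x).fun_mul (hG 1 x))).const_mul 8)).fun_add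
    (((hU 0 x).fun_mul ((hG 0 x).fun_mul (hG 2 x))).const_mul 8)).fun_sub
    ((hG 2 x).const_mul (4 * δ))
  rw [funext hA] at h
  linear_combination h.unique (hasDerivAt_const x (0 : ℝ))

/-- The `x`-derivative of the equation for `w_xx` with denominators cleared.  In that equation
`g_x² - w²` has been eliminated
by means of the equation for `g_xx`, which lowers its degree. -/
theorem jet_w3 (α δ : ℝ) (U V G W : ℕ → ℝ → ℝ)
    (hU : ∀ n x, HasDerivAt (U n) (U (n + 1) x) x)
    (hV : ∀ n x, HasDerivAt (V n) (V (n + 1) x) x)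
    (hG : ∀ n x, HasDerivAt (G n) (G (n + 1) x) x)
    (hW : ∀ n x, HasDerivAt (W n) (W (n + 1) x) x)
    (hB : ∀ x, 6 * (G 0 x * W 2 x) - 3 * (G 1 x * W 1 x) + W 0 x * G 2 x
      + 4 * (U 0 x * (G 0 x * W 0 x)) + 2 * δ * W 0 x
      - 6 * ((2 * α - 2 * V 0 x + U 1 x) * (G 0 x * G 0 x)) = 0) (x : ℝ) :
    6 * (G 0 x * W 3 x) + 3 * (G 1 x * W 2 x) - 2 * (G 2 x * W 1 x) + W 0 x * G 3 x
      + 4 * (U 1 x * (G 0 x * W 0 x)) + 4 * (U 0 x * (G 1 x * W 0 x))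
      + 4 * (U 0 x * (G 0 x * W 1 x)) + 2 * δ * W 1 x
      - 6 * ((U 2 x - 2 * V 1 x) * (G 0 x * G 0 x))
      - 12 * ((2 * α - 2 * V 0 x + U 1 x) * (G 0 x * G 1 x)) = 0 := by
  have h := (((((((hG 0 x).fun_mul (hW 2 x)).const_mul 6).fun_sub
    (((hG 1 x).fun_mul (hW 1 x)).const_mul 3)).fun_add
    ((hW 0 x).fun_mul (hG 2 x))).fun_add
    (((hU 0 x).fun_mul ((hG 0 x).fun_mul (hW 0 x))).const_mul 4)).fun_add
    ((hW 0 x).const_mul (2 * δ))).fun_sub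
    ((((((hV 0 x).const_mul 2).const_sub (2 * α)).fun_add (hU 1 x)).fun_mul
      ((hG 0 x).fun_mul (hG 0 x))).const_mul 6)
  rw [funext hB] at h
  linear_combination h.unique (hasDerivAt_const x (0 : ℝ))

/-- The second `x`-derivative of the equation for `w_xx`. -/
theorem jet_w4 (α δ : ℝ) (U V G W : ℕ → ℝ → ℝ)
    (hU : ∀ n x, HasDerivAt (U n) (U (n + 1) x) x)
    (hV : ∀ n x, HasDerivAt (V n) (V (n + 1) x) x)
    (hG : ∀ n x, HasDerivAt (G n) (G (n + 1) x) x)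
    (hW : ∀ n x, HasDerivAt (W n) (W (n + 1) x) x)
    (hB : ∀ x, 6 * (G 0 x * W 3 x) + 3 * (G 1 x * W 2 x) - 2 * (G 2 x * W 1 x) + W 0 x * G 3 x
      + 4 * (U 1 x * (G 0 x * W 0 x)) + 4 * (U 0 x * (G 1 x * W 0 x))
      + 4 * (U 0 x * (G 0 x * W 1 x)) + 2 * δ * W 1 x
      - 6 * ((U 2 x - 2 * V 1 x) * (G 0 x * G 0 x))
      - 12 * ((2 * α - 2 * V 0 x + U 1 x) * (G 0 x * G 1 x)) = 0) (x : ℝ) :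
    6 * (G 0 x * W 4 x) + 9 * (G 1 x * W 3 x) + G 2 x * W 2 x - G 3 x * W 1 x + W 0 x * G 4 x
      + 4 * (U 2 x * (G 0 x * W 0 x)) + 8 * (U 1 x * (G 1 x * W 0 x))
      + 8 * (U 1 x * (G 0 x * W 1 x)) + 4 * (U 0 x * (G 2 x * W 0 x))
      + 8 * (U 0 x * (G 1 x * W 1 x)) + 4 * (U 0 x * (G 0 x * W 2 x)) + 2 * δ * W 2 x
      - 6 * ((U 3 x - 2 * V 2 x) * (G 0 x * G 0 x))
      - 24 * ((U 2 x - 2 * V 1 x) * (G 0 x * G 1 x))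
      - 12 * ((2 * α - 2 * V 0 x + U 1 x) * (G 1 x * G 1 x + G 0 x * G 2 x)) = 0 := by
  have h := (((((((((((hG 0 x).fun_mul (hW 3 x)).const_mul 6).fun_add
    (((hG 1 x).fun_mul (hW 2 x)).const_mul 3)).fun_sub
    (((hG 2 x).fun_mul (hW 1 x)).const_mul 2)).fun_add
    ((hW 0 x).fun_mul (hG 3 x))).fun_add
    (((hU 1 x).fun_mul ((hG 0 x).fun_mul (hW 0 x))).const_mul 4)).fun_add
    (((hU 0 x).fun_mul ((hG 1 x).fun_mul (hW 0 x))).const_mul 4)).fun_add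
    (((hU 0 x).fun_mul ((hG 0 x).fun_mul (hW 1 x))).const_mul 4)).fun_add
    ((hW 1 x).const_mul (2 * δ))).fun_sub
    ((((hU 2 x).fun_sub ((hV 1 x).const_mul 2)).fun_mul
      ((hG 0 x).fun_mul (hG 0 x))).const_mul 6)).fun_sub
    ((((((hV 0 x).const_mul 2).const_sub (2 * α)).fun_add (hU 1 x)).fun_mul
      ((hG 0 x).fun_mul (hG 1 x))).const_mul 12)
  rw [funext hB] at h
  linear_combination h.unique (hasDerivAt_const x (0 : ℝ))

/-! ### The rational identities behind (E1) and (E2) -/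

/-- The pointwise algebraic content of (E1): here `gᵢ, wᵢ, uᵢ, vᵢ` are the values of the `i`-th
`x`-derivatives, and the terms `2 g₄` of `p_xxxx` and `2 q_xxx` have cancelled. -/
theorem boussinesq_E1 (α δ u0 u1 u2 v0 v1 g0 g1 g2 g3 w0 w1 w2 w3 : ℝ) (h0 : g0 ≠ 0)
    (A0 : 4 * (g0 * g2) - 3 * (g1 * g1 - w0 * w0) + 4 * (u0 * (g0 * g0)) - 4 * δ * g0 = 0)
    (A1 : 4 * (g0 * g3) - 2 * (g1 * g2) + 6 * (w0 * w1)
      + 4 * (u1 * (g0 * g0)) + 8 * (u0 * (g0 * g1)) - 4 * δ * g1 = 0)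
    (B0 : 6 * (g0 * w2) - 3 * (g1 * w1) + w0 * g2
      + 4 * (u0 * (g0 * w0)) + 2 * δ * w0 - 6 * ((2 * α - 2 * v0 + u1) * (g0 * g0)) = 0)
    (B1 : 6 * (g0 * w3) + 3 * (g1 * w2) - 2 * (g2 * w1) + w0 * g3
      + 4 * (u1 * (g0 * w0)) + 4 * (u0 * (g1 * w0))
      + 4 * (u0 * (g0 * w1)) + 2 * δ * w1
      - 6 * ((u2 - 2 * v1) * (g0 * g0)) - 12 * ((2 * α - 2 * v0 + u1) * (g0 * g1)) = 0) :
    u0 * (2 * g2) + (2 * u1 - 3 * (v0 - α)) * (2 * g1) + (u2 - 2 * v1) * (2 * g0)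
      - 2 * w3 - 2 * u0 * (g2 + w1) - u1 * (g1 + w0) = 0 := by
  have e2 : g2 = (3 * (g1 * g1 - w0 * w0) - 4 * (u0 * (g0 * g0)) + 4 * δ * g0) / (4 * g0) := by
    rw [eq_div_iff (by simpa using h0)]; linear_combination A0
  have e3 : g3 = (2 * (g1 * g2) - 6 * (w0 * w1)
      - 4 * (u1 * (g0 * g0)) - 8 * (u0 * (g0 * g1)) + 4 * δ * g1) / (4 * g0) := by
    rw [eq_div_iff (by simpa using h0)]; linear_combination A1
  have f2 : w2 = (3 * (g1 * w1) - w0 * g2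
      - 4 * (u0 * (g0 * w0)) - 2 * δ * w0 + 6 * ((2 * α - 2 * v0 + u1) * (g0 * g0)))
      / (6 * g0) := by
    rw [eq_div_iff (by simpa using h0)]; linear_combination B0
  have f3 : w3 = -(3 * (g1 * w2) - 2 * (g2 * w1) + w0 * g3
      + 4 * (u1 * (g0 * w0)) + 4 * (u0 * (g1 * w0))
      + 4 * (u0 * (g0 * w1)) + 2 * δ * w1
      - 6 * ((u2 - 2 * v1) * (g0 * g0)) - 12 * ((2 * α - 2 * v0 + u1) * (g0 * g1)))
      / (6 * g0) := by
    rw [eq_div_iff (by simpa using h0)]; linear_combination B1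
  clear A0 A1 B0 B1
  subst f3 f2 e3 e2
  field_simp
  ring

/-- The pointwise algebraic content of (E2), in the notation of `boussinesq_E1`. -/
theorem boussinesq_E2 (α δ u0 u1 u2 u3 v0 v1 v2 g0 g1 g2 g3 g4 g5 w0 w1 w2 w3 w4 : ℝ)
    (h0 : g0 ≠ 0)
    (A0 : 4 * (g0 * g2) - 3 * (g1 * g1 - w0 * w0) + 4 * (u0 * (g0 * g0)) - 4 * δ * g0 = 0)
    (A1 : 4 * (g0 * g3) - 2 * (g1 * g2) + 6 * (w0 * w1)
      + 4 * (u1 * (g0 * g0)) + 8 * (u0 * (g0 * g1)) - 4 * δ * g1 = 0)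
    (A2 : 4 * (g0 * g4) + 2 * (g1 * g3) - 2 * (g2 * g2)
      + 6 * (w1 * w1) + 6 * (w0 * w2)
      + 4 * (u2 * (g0 * g0)) + 16 * (u1 * (g0 * g1))
      + 8 * (u0 * (g1 * g1)) + 8 * (u0 * (g0 * g2)) - 4 * δ * g2 = 0)
    (A3 : 4 * (g0 * g5) + 6 * (g1 * g4) - 2 * (g2 * g3)
      + 18 * (w1 * w2) + 6 * (w0 * w3)
      + 4 * (u3 * (g0 * g0)) + 24 * (u2 * (g0 * g1))
      + 24 * (u1 * (g1 * g1)) + 24 * (u1 * (g0 * g2))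
      + 24 * (u0 * (g1 * g2)) + 8 * (u0 * (g0 * g3)) - 4 * δ * g3 = 0)
    (B0 : 6 * (g0 * w2) - 3 * (g1 * w1) + w0 * g2
      + 4 * (u0 * (g0 * w0)) + 2 * δ * w0 - 6 * ((2 * α - 2 * v0 + u1) * (g0 * g0)) = 0)
    (B1 : 6 * (g0 * w3) + 3 * (g1 * w2) - 2 * (g2 * w1) + w0 * g3
      + 4 * (u1 * (g0 * w0)) + 4 * (u0 * (g1 * w0))
      + 4 * (u0 * (g0 * w1)) + 2 * δ * w1
      - 6 * ((u2 - 2 * v1) * (g0 * g0)) - 12 * ((2 * α - 2 * v0 + u1) * (g0 * g1)) = 0)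
    (B2 : 6 * (g0 * w4) + 9 * (g1 * w3) + g2 * w2 - g3 * w1 + w0 * g4
      + 4 * (u2 * (g0 * w0)) + 8 * (u1 * (g1 * w0))
      + 8 * (u1 * (g0 * w1)) + 4 * (u0 * (g2 * w0))
      + 8 * (u0 * (g1 * w1)) + 4 * (u0 * (g0 * w2)) + 2 * δ * w2
      - 6 * ((u3 - 2 * v2) * (g0 * g0)) - 24 * ((u2 - 2 * v1) * (g0 * g1))
      - 12 * ((2 * α - 2 * v0 + u1) * (g1 * g1 + g0 * g2)) = 0) :
    2 * u0 * (2 * g3) + 6 * (v0 - α) * (2 * g2) + 2 * (2 * v1 + u0 ^ 2) * (2 * g1)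
      + (v2 + 2 * u0 * u1) * (2 * g0) + (g5 + w4) + u0 * (g3 + w2)
      + 3 * (2 * u1 - 3 * (v0 - α)) * (g2 + w1) + (2 * u2 - 3 * v1) * (g1 + w0) = 0 := by
  have e2 : g2 = (3 * (g1 * g1 - w0 * w0) - 4 * (u0 * (g0 * g0)) + 4 * δ * g0) / (4 * g0) := by
    rw [eq_div_iff (by simpa using h0)]; linear_combination A0
  have e3 : g3 = (2 * (g1 * g2) - 6 * (w0 * w1)
      - 4 * (u1 * (g0 * g0)) - 8 * (u0 * (g0 * g1)) + 4 * δ * g1) / (4 * g0) := by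
    rw [eq_div_iff (by simpa using h0)]; linear_combination A1
  have f2 : w2 = (3 * (g1 * w1) - w0 * g2
      - 4 * (u0 * (g0 * w0)) - 2 * δ * w0 + 6 * ((2 * α - 2 * v0 + u1) * (g0 * g0)))
      / (6 * g0) := by
    rw [eq_div_iff (by simpa using h0)]; linear_combination B0
  have f3 : w3 = -(3 * (g1 * w2) - 2 * (g2 * w1) + w0 * g3
      + 4 * (u1 * (g0 * w0)) + 4 * (u0 * (g1 * w0))
      + 4 * (u0 * (g0 * w1)) + 2 * δ * w1
      - 6 * ((u2 - 2 * v1) * (g0 * g0)) - 12 * ((2 * α - 2 * v0 + u1) * (g0 * g1)))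
      / (6 * g0) := by
    rw [eq_div_iff (by simpa using h0)]; linear_combination B1
  have e4 : g4 = -(2 * (g1 * g3) - 2 * (g2 * g2)
      + 6 * (w1 * w1) + 6 * (w0 * w2)
      + 4 * (u2 * (g0 * g0)) + 16 * (u1 * (g0 * g1))
      + 8 * (u0 * (g1 * g1)) + 8 * (u0 * (g0 * g2)) - 4 * δ * g2) / (4 * g0) := by
    rw [eq_div_iff (by simpa using h0)]; linear_combination A2
  have e5 : g5 = -(6 * (g1 * g4) - 2 * (g2 * g3)
      + 18 * (w1 * w2) + 6 * (w0 * w3)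
      + 4 * (u3 * (g0 * g0)) + 24 * (u2 * (g0 * g1))
      + 24 * (u1 * (g1 * g1)) + 24 * (u1 * (g0 * g2))
      + 24 * (u0 * (g1 * g2)) + 8 * (u0 * (g0 * g3)) - 4 * δ * g3) / (4 * g0) := by
    rw [eq_div_iff (by simpa using h0)]; linear_combination A3
  have f4 : w4 = -(9 * (g1 * w3) + g2 * w2 - g3 * w1 + w0 * g4
      + 4 * (u2 * (g0 * w0)) + 8 * (u1 * (g1 * w0))
      + 8 * (u1 * (g0 * w1)) + 4 * (u0 * (g2 * w0))
      + 8 * (u0 * (g1 * w1)) + 4 * (u0 * (g0 * w2)) + 2 * δ * w2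
      - 6 * ((u3 - 2 * v2) * (g0 * g0)) - 24 * ((u2 - 2 * v1) * (g0 * g1))
      - 12 * ((2 * α - 2 * v0 + u1) * (g1 * g1 + g0 * g2))) / (6 * g0) := by
    rw [eq_div_iff (by simpa using h0)]; linear_combination B2
  clear A0 A1 A2 A3 B0 B1 B2
  subst e5 f4 e4 f3 f2 e3 e2
  field_simp
  ring

/-! ### Partial derivatives of smooth functions of two variables -/

theorem hasDerivAt_fst_fderiv {f : ℝ → ℝ → ℝ} (hf : ContDiff ℝ (⊤ : ℕ∞) (Function.uncurry f))
    (x t : ℝ) :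
    HasDerivAt (fun x' => f x' t) (fderiv ℝ (Function.uncurry f) (x, t) (1, 0)) x := by
  have h1 : HasFDerivAt (Function.uncurry f) (fderiv ℝ (Function.uncurry f) (x, t)) (x, t) :=
    (hf.differentiable (by simp) _).hasFDerivAt
  exact h1.comp_hasDerivAt x ((hasDerivAt_id x).prodMk (hasDerivAt_const x t))

theorem hasDerivAt_snd_fderiv {f : ℝ → ℝ → ℝ} (hf : ContDiff ℝ (⊤ : ℕ∞) (Function.uncurry f))
    (x t : ℝ) :
    HasDerivAt (fun t' => f x t') (fderiv ℝ (Function.uncurry f) (x, t) (0, 1)) t := by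
  have h1 : HasFDerivAt (Function.uncurry f) (fderiv ℝ (Function.uncurry f) (x, t)) (x, t) :=
    (hf.differentiable (by simp) _).hasFDerivAt
  exact h1.comp_hasDerivAt t ((hasDerivAt_const t x).prodMk (hasDerivAt_id t))

theorem hasDerivAt_pdx {f : ℝ → ℝ → ℝ} (hf : ContDiff ℝ (⊤ : ℕ∞) (Function.uncurry f))
    (x t : ℝ) : HasDerivAt (fun x' => f x' t) (pdx f x t) x :=
  (hasDerivAt_fst_fderiv hf x t).differentiableAt.hasDerivAt

theorem hasDerivAt_pdt {f : ℝ → ℝ → ℝ} (hf : ContDiff ℝ (⊤ : ℕ∞) (Function.uncurry f))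
    (x t : ℝ) : HasDerivAt (fun t' => f x t') (pdt f x t) t :=
  (hasDerivAt_snd_fderiv hf x t).differentiableAt.hasDerivAt

theorem uncurry_pdx {f : ℝ → ℝ → ℝ} (hf : ContDiff ℝ (⊤ : ℕ∞) (Function.uncurry f)) :
    Function.uncurry (pdx f) = fun z => fderiv ℝ (Function.uncurry f) z (1, 0) := by
  funext ⟨x, t⟩
  exact (hasDerivAt_fst_fderiv hf x t).deriv

theorem uncurry_pdt {f : ℝ → ℝ → ℝ} (hf : ContDiff ℝ (⊤ : ℕ∞) (Function.uncurry f)) :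
    Function.uncurry (pdt f) = fun z => fderiv ℝ (Function.uncurry f) z (0, 1) := by
  funext ⟨x, t⟩
  exact (hasDerivAt_snd_fderiv hf x t).deriv

theorem contDiff_pdx {f : ℝ → ℝ → ℝ} (hf : ContDiff ℝ (⊤ : ℕ∞) (Function.uncurry f)) :
    ContDiff ℝ (⊤ : ℕ∞) (Function.uncurry (pdx f)) := by
  rw [uncurry_pdx hf]
  exact (hf.fderiv_right (by simp)).clm_apply contDiff_const

theorem contDiff_pdt {f : ℝ → ℝ → ℝ} (hf : ContDiff ℝ (⊤ : ℕ∞) (Function.uncurry f)) :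
    ContDiff ℝ (⊤ : ℕ∞) (Function.uncurry (pdt f)) := by
  rw [uncurry_pdt hf]
  exact (hf.fderiv_right (by simp)).clm_apply contDiff_const

/-- Equality of mixed partial derivatives. -/
theorem pdt_pdx_comm {f : ℝ → ℝ → ℝ} (hf : ContDiff ℝ (⊤ : ℕ∞) (Function.uncurry f))
    (x t : ℝ) : pdt (pdx f) x t = pdx (pdt f) x t := by
  have hd : DifferentiableAt ℝ (fderiv ℝ (Function.uncurry f)) (x, t) :=
    (hf.fderiv_right (m := (⊤ : ℕ∞)) (by simp)).differentiable (by simp) _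
  have h1 : pdt (pdx f) x t = fderiv ℝ (fderiv ℝ (Function.uncurry f)) (x, t) (0, 1) (1, 0) := by
    have := congrFun (uncurry_pdt (contDiff_pdx hf)) (x, t)
    rw [uncurry_pdx hf, fderiv_clm_apply hd (differentiableAt_const _)] at this
    simpa using this
  have h2 : pdx (pdt f) x t = fderiv ℝ (fderiv ℝ (Function.uncurry f)) (x, t) (1, 0) (0, 1) := by
    have := congrFun (uncurry_pdx (contDiff_pdt hf)) (x, t)
    rw [uncurry_pdt hf, fderiv_clm_apply hd (differentiableAt_const _)] at this
    simpa using this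
  have h2top : minSmoothness ℝ 2 ≤ ((⊤ : ℕ∞) : WithTop ℕ∞) := by
    simp only [minSmoothness_of_isRCLikeNormedField]
    exact WithTop.coe_le_coe.2 le_top
  rw [h1, h2]
  exact (hf.contDiffAt.isSymmSndFDerivAt h2top).eq (0, 1) (1, 0)

theorem contDiff_iterate_pdx {f : ℝ → ℝ → ℝ} (hf : ContDiff ℝ (⊤ : ℕ∞) (Function.uncurry f))
    (n : ℕ) : ContDiff ℝ (⊤ : ℕ∞) (Function.uncurry (pdx^[n] f)) := by
  induction n with
  | zero => exact hf
  | succ n ih => rw [Function.iterate_succ_apply']; exact contDiff_pdx ih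

/-- For fixed `t`, the functions `∂ₓⁿ f(·, t)` form a sequence of successive derivatives. -/
theorem hasDerivAt_iterate_pdx {f : ℝ → ℝ → ℝ}
    (hf : ContDiff ℝ (⊤ : ℕ∞) (Function.uncurry f)) (t : ℝ) (n : ℕ) (x : ℝ) :
    HasDerivAt (fun x' => pdx^[n] f x' t) (pdx^[n + 1] f x t) x := by
  rw [Function.iterate_succ_apply']
  exact hasDerivAt_pdx (contDiff_iterate_pdx hf n) x t

theorem iterate_pdx_pB {g : ℝ → ℝ → ℝ} (hg : ContDiff ℝ (⊤ : ℕ∞) (Function.uncurry g)) (n : ℕ) :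
    pdx^[n] (pB g) = fun x t => 2 * pdx^[n] g x t := by
  induction n with
  | zero => rfl
  | succ n ih =>
    funext x t
    rw [Function.iterate_succ_apply', ih]
    exact ((hasDerivAt_iterate_pdx hg t n x).const_mul 2).deriv

theorem iterate_pdx_qB {g w : ℝ → ℝ → ℝ} (hg : ContDiff ℝ (⊤ : ℕ∞) (Function.uncurry g))
    (hw : ContDiff ℝ (⊤ : ℕ∞) (Function.uncurry w)) (n : ℕ) :
    pdx^[n] (qB g w) = fun x t => pdx^[n + 1] g x t + pdx^[n] w x t := by
  induction n with
  | zero => rfl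
  | succ n ih =>
    funext x t
    rw [Function.iterate_succ_apply', ih]
    exact ((hasDerivAt_iterate_pdx hg t (n + 1) x).add (hasDerivAt_iterate_pdx hw t n x)).deriv

/-! ### The negative symmetry -/

theorem stmt5 (α δ : ℝ) (u v g w : ℝ → ℝ → ℝ)
    (hu : ContDiff ℝ (⊤ : ℕ∞) (Function.uncurry u))
    (hv : ContDiff ℝ (⊤ : ℕ∞) (Function.uncurry v))
    (hg : ContDiff ℝ (⊤ : ℕ∞) (Function.uncurry g))
    (hw : ContDiff ℝ (⊤ : ℕ∞) (Function.uncurry w))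
    (hg0 : ∀ x t, g x t ≠ 0)
    (hgxx : ∀ x t, pdx (pdx g) x t =
      3 * ((pdx g x t) ^ 2 - (w x t) ^ 2) / (4 * g x t) - u x t * g x t + δ)
    (hwxx : ∀ x t, pdx (pdx w) x t =
      pdx g x t * pdx w x t / (2 * g x t)
        - w x t * ((pdx g x t) ^ 2 - (w x t) ^ 2) / (8 * (g x t) ^ 2)
        - δ * w x t / (2 * g x t) - (u x t / 2) * w x t
        + (2 * α - 2 * v x t + pdx u x t) * g x t)
    (hgt : ∀ x t, pdt g x t = 3 * pdx w x t)
    (hwt : ∀ x t, pdt w x t =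
      -3 * pdx g x t * ((pdx g x t) ^ 2 - (w x t) ^ 2) / (8 * (g x t) ^ 2)
        + 3 * w x t * pdx w x t / (2 * g x t) - 3 * δ * pdx g x t / (2 * g x t)
        - (3 / 2) * u x t * pdx g x t + pdx u x t * g x t) :
    (∀ x t, pdx^[4] (pB g) x t + u x t * pdx^[2] (pB g) x t
        + (2 * pdx u x t - 3 * (v x t - α)) * pdx (pB g) x t
        + (pdx^[2] u x t - 2 * pdx v x t) * pB g x t
        - 2 * pdx^[3] (qB g w) x t - 2 * u x t * pdx (qB g w) x t
        - pdx u x t * qB g w x t = 0) ∧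
    (∀ x t, 2 * u x t * pdx^[3] (pB g) x t + 6 * (v x t - α) * pdx^[2] (pB g) x t
        + 2 * (2 * pdx v x t + u x t ^ 2) * pdx (pB g) x t
        + (pdx^[2] v x t + 2 * u x t * pdx u x t) * pB g x t
        + pdx^[4] (qB g w) x t + u x t * pdx^[2] (qB g w) x t
        + 3 * (2 * pdx u x t - 3 * (v x t - α)) * pdx (qB g w) x t
        + (2 * pdx^[2] u x t - 3 * pdx v x t) * qB g w x t = 0) ∧
    (∀ x t, pdt (pB g) x t = -3 * pdx^[2] (pB g) x t + 6 * pdx (qB g w) x t) ∧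
    (∀ x t, pdt (qB g w) x t = -2 * pdx^[3] (pB g) x t + 3 * pdx^[2] (qB g w) x t
        - 2 * u x t * pdx (pB g) x t) := by
  have A0 : ∀ x t, 4 * (pdx^[0] g x t * pdx^[2] g x t)
      - 3 * (pdx^[1] g x t * pdx^[1] g x t - pdx^[0] w x t * pdx^[0] w x t)
      + 4 * (pdx^[0] u x t * (pdx^[0] g x t * pdx^[0] g x t)) - 4 * δ * pdx^[0] g x t = 0 := by
    intro x t
    have h := hgxx x t
    have h0 := hg0 x t
    simp only [Function.iterate_succ, Function.iterate_zero, Function.comp_apply, id_eq]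
    rw [h]
    field_simp
    ring
  have B0 : ∀ x t, 6 * (pdx^[0] g x t * pdx^[2] w x t) - 3 * (pdx^[1] g x t * pdx^[1] w x t)
      + pdx^[0] w x t * pdx^[2] g x t
      + 4 * (pdx^[0] u x t * (pdx^[0] g x t * pdx^[0] w x t)) + 2 * δ * pdx^[0] w x t
      - 6 * ((2 * α - 2 * pdx^[0] v x t + pdx^[1] u x t)
        * (pdx^[0] g x t * pdx^[0] g x t)) = 0 := by
    intro x t
    have h0 := hg0 x t
    simp only [Function.iterate_succ, Function.iterate_zero, Function.comp_apply, id_eq]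
    rw [hgxx x t, hwxx x t]
    field_simp
    ring
  have A1 := fun x t => jet_g3 δ (fun n y => pdx^[n] u y t) (fun n y => pdx^[n] g y t)
    (fun n y => pdx^[n] w y t) (hasDerivAt_iterate_pdx hu t) (hasDerivAt_iterate_pdx hg t)
    (hasDerivAt_iterate_pdx hw t) (fun y => A0 y t) x
  have A2 := fun x t => jet_g4 δ (fun n y => pdx^[n] u y t) (fun n y => pdx^[n] g y t)
    (fun n y => pdx^[n] w y t) (hasDerivAt_iterate_pdx hu t) (hasDerivAt_iterate_pdx hg t)
    (hasDerivAt_iterate_pdx hw t) (fun y => A1 y t) x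
  have A3 := fun x t => jet_g5 δ (fun n y => pdx^[n] u y t) (fun n y => pdx^[n] g y t)
    (fun n y => pdx^[n] w y t) (hasDerivAt_iterate_pdx hu t) (hasDerivAt_iterate_pdx hg t)
    (hasDerivAt_iterate_pdx hw t) (fun y => A2 y t) x
  have B1 := fun x t => jet_w3 α δ (fun n y => pdx^[n] u y t) (fun n y => pdx^[n] v y t)
    (fun n y => pdx^[n] g y t) (fun n y => pdx^[n] w y t) (hasDerivAt_iterate_pdx hu t)
    (hasDerivAt_iterate_pdx hv t) (hasDerivAt_iterate_pdx hg t)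
    (hasDerivAt_iterate_pdx hw t) (fun y => B0 y t) x
  have B2 := fun x t => jet_w4 α δ (fun n y => pdx^[n] u y t) (fun n y => pdx^[n] v y t)
    (fun n y => pdx^[n] g y t) (fun n y => pdx^[n] w y t) (hasDerivAt_iterate_pdx hu t)
    (hasDerivAt_iterate_pdx hv t) (hasDerivAt_iterate_pdx hg t)
    (hasDerivAt_iterate_pdx hw t) (fun y => B1 y t) x
  have hp1 : pdx (pB g) = fun x t => 2 * pdx g x t := iterate_pdx_pB hg 1
  have hq1 : pdx (qB g w) = fun x t => pdx^[2] g x t + pdx w x t := iterate_pdx_qB hg hw 1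
  refine ⟨fun x t => ?_, fun x t => ?_, fun x t => ?_, fun x t => ?_⟩
  · have h := boussinesq_E1 α δ _ _ _ _ _ _ _ _ _ _ _ _ _ (hg0 x t) (A0 x t) (A1 x t) (B0 x t)
      (B1 x t)
    rw [iterate_pdx_pB hg, iterate_pdx_pB hg, iterate_pdx_qB hg hw, hp1, hq1]
    simp only [pB, qB]
    simp only [Function.iterate_zero, Function.iterate_one, id_eq] at h
    linear_combination h
  · have h := boussinesq_E2 α δ _ _ _ _ _ _ _ _ _ _ _ _ _ _ _ _ _ _ (hg0 x t) (A0 x t) (A1 x t)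
      (A2 x t) (A3 x t) (B0 x t) (B1 x t) (B2 x t)
    rw [iterate_pdx_pB hg, iterate_pdx_pB hg, iterate_pdx_qB hg hw, iterate_pdx_qB hg hw, hp1, hq1]
    simp only [pB, qB]
    simp only [Function.iterate_zero, Function.iterate_one, id_eq] at h
    linear_combination h
  · have h : pdt (pB g) x t = 2 * pdt g x t := ((hasDerivAt_pdt hg x t).const_mul 2).deriv
    rw [h, iterate_pdx_pB hg, hq1, hgt]
    ring
  · have h : pdt (qB g w) x t = pdt (pdx g) x t + pdt w x t :=
      ((hasDerivAt_pdt (contDiff_pdx hg) x t).add (hasDerivAt_pdt hw x t)).deriv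
    have hgtx : pdx (pdt g) x t = 3 * pdx^[2] w x t := by
      have e : pdt g = fun x t => 3 * pdx w x t := by funext x t; exact hgt x t
      rw [e]
      exact ((hasDerivAt_pdx (contDiff_pdx hw) x t).const_mul 3).deriv
    rw [h, pdt_pdx_comm hg, hgtx, iterate_pdx_pB hg, iterate_pdx_qB hg hw, hp1, hwt]
    have h0 := hg0 x t
    have a0 := A0 x t
    have a1 := A1 x t
    simp only [Function.iterate_zero, Function.iterate_one, id_eq, Nat.reduceAdd] at a0 a1 ⊢
    -- Clearing denominators leaves `w_t = -g_xxx - 4 u g_x`, to be read modulo the `g_xx` equation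
    -- and its derivative.
    field_simp
    linear_combination 4 * g x t * a1 + 2 * pdx g x t * a0
end
end

section
/- Let α ∈ ℝ and let u, v, ψ, φ: ℝ → ℝ be smooth functions both satisfying f'''' = 2uf'' + 2u_x f' + (u_{xx} − u² − v + α)f (for f = ψ and f = φ). Set g := φψ, w := φψ' − φ'ψ, and δ := φψ''' − φ'ψ'' + φ''ψ' − φ'''ψ − 2uw. Then the following identities hold on ℝ: 2w w'''' − 2w' w''' + (w'')² = 4u(2w w'' − (w')²) + 4u_x w w' + 4(v − α)w² + δ², and, at every point where g ≠ 0, w g'' − w' g' + w'' g = (w/(2g))((g')² − w²) + (2uw + δ)g. -/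
/-!
Write `p i j = φ⁽ⁱ⁾ψ⁽ʲ⁾ - φ⁽ʲ⁾ψ⁽ⁱ⁾`. Then `w = p 0 1`, `w' = p 0 2`, `w'' = p 0 3 + p 1 2` and
`δ = p 0 3 - p 1 2 - 2uw`. The fourth-order equation expresses `p 0 4` and `p 1 4` through the
`p i j` with `i, j ≤ 3`, hence also `w⁽³⁾` and `w⁽⁴⁾`. The first identity is then the Plücker
relation `p 0 1 * p 2 3 - p 0 2 * p 1 3 + p 0 3 * p 1 2 = 0`, which turns `(p 0 3 + p 1 2)²` into
`(p 0 3 - p 1 2)²`. The second is a pointwise polynomial identity in the derivatives of `φ` and `ψ`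
of order at most three, once `(g')² - w² = 4φφ'ψψ'` is used to cancel the denominator.
-/

noncomputable section

/-- Product of eigenfunctions `g = φψ`. -/
def gDS (ψ φ : ℝ → ℝ) : ℝ → ℝ := fun x => φ x * ψ x

/-- Wronskian of eigenfunctions `w = φψ' - φ'ψ`. -/
def wDS (ψ φ : ℝ → ℝ) : ℝ → ℝ := fun x => φ x * deriv ψ x - deriv φ x * ψ x

/-- The first integral `δ = φψ''' - φ'ψ'' + φ''ψ' - φ'''ψ - 2uw`. -/
def dDS (u ψ φ : ℝ → ℝ) : ℝ → ℝ := fun x =>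
  φ x * deriv^[3] ψ x - deriv φ x * deriv^[2] ψ x + deriv^[2] φ x * deriv ψ x
    - deriv^[3] φ x * ψ x - 2 * u x * wDS ψ φ x

theorem hasDerivAt_iterate_deriv {f : ℝ → ℝ} (hf : ContDiff ℝ (⊤ : ℕ∞) f) (n : ℕ) (x : ℝ) :
    HasDerivAt (deriv^[n] f) (deriv^[n + 1] f x) x := by
  have h : ContDiff ℝ (⊤ : ℕ∞) (deriv^[n] f) := hf.iterate_deriv n
  rw [Function.iterate_succ_apply']
  exact (h.differentiable (by simp) x).hasDerivAt

theorem stmt15 (α : ℝ) (u v ψ φ : ℝ → ℝ)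
    (hu : ContDiff ℝ (⊤ : ℕ∞) u) (hv : ContDiff ℝ (⊤ : ℕ∞) v)
    (hψ : ContDiff ℝ (⊤ : ℕ∞) ψ) (hφ : ContDiff ℝ (⊤ : ℕ∞) φ)
    (heigψ : ∀ x : ℝ, deriv^[4] ψ x = 2 * u x * deriv^[2] ψ x
      + 2 * deriv u x * deriv ψ x + (deriv^[2] u x - u x ^ 2 - v x + α) * ψ x)
    (heigφ : ∀ x : ℝ, deriv^[4] φ x = 2 * u x * deriv^[2] φ x
      + 2 * deriv u x * deriv φ x + (deriv^[2] u x - u x ^ 2 - v x + α) * φ x) :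
    (∀ x : ℝ,
      2 * wDS ψ φ x * deriv^[4] (wDS ψ φ) x
          - 2 * deriv (wDS ψ φ) x * deriv^[3] (wDS ψ φ) x
          + (deriv^[2] (wDS ψ φ) x) ^ 2 =
        4 * u x * (2 * wDS ψ φ x * deriv^[2] (wDS ψ φ) x - (deriv (wDS ψ φ) x) ^ 2)
          + 4 * deriv u x * wDS ψ φ x * deriv (wDS ψ φ) x
          + 4 * (v x - α) * (wDS ψ φ x) ^ 2 + (dDS u ψ φ x) ^ 2) ∧
    (∀ x : ℝ, gDS ψ φ x ≠ 0 →
      wDS ψ φ x * deriv^[2] (gDS ψ φ) x - deriv (wDS ψ φ) x * deriv (gDS ψ φ) x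
          + deriv^[2] (wDS ψ φ) x * gDS ψ φ x =
        (wDS ψ φ x / (2 * gDS ψ φ x)) * ((deriv (gDS ψ φ) x) ^ 2 - (wDS ψ φ x) ^ 2)
          + (2 * u x * wDS ψ φ x + dDS u ψ φ x) * gDS ψ φ x) := by
  have a0 : ∀ x, HasDerivAt φ (deriv φ x) x := hasDerivAt_iterate_deriv hφ 0
  have a1 : ∀ x, HasDerivAt (deriv φ) (deriv^[2] φ x) x := hasDerivAt_iterate_deriv hφ 1
  have a2 : ∀ x, HasDerivAt (deriv^[2] φ) (deriv^[3] φ x) x := hasDerivAt_iterate_deriv hφ 2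
  have a3 : ∀ x, HasDerivAt (deriv^[3] φ) (deriv^[4] φ x) x := hasDerivAt_iterate_deriv hφ 3
  have b0 : ∀ x, HasDerivAt ψ (deriv ψ x) x := hasDerivAt_iterate_deriv hψ 0
  have b1 : ∀ x, HasDerivAt (deriv ψ) (deriv^[2] ψ x) x := hasDerivAt_iterate_deriv hψ 1
  have b2 : ∀ x, HasDerivAt (deriv^[2] ψ) (deriv^[3] ψ x) x := hasDerivAt_iterate_deriv hψ 2
  have b3 : ∀ x, HasDerivAt (deriv^[3] ψ) (deriv^[4] ψ x) x := hasDerivAt_iterate_deriv hψ 3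
  have u0 : ∀ x, HasDerivAt u (deriv u x) x := hasDerivAt_iterate_deriv hu 0
  have u1 : ∀ x, HasDerivAt (deriv u) (deriv^[2] u x) x := hasDerivAt_iterate_deriv hu 1
  have w1 : deriv (wDS ψ φ) = fun x => φ x * deriv^[2] ψ x - deriv^[2] φ x * ψ x := by
    funext x
    refine ((((a0 x).mul (b1 x)).sub ((a1 x).mul (b0 x))).congr_deriv ?_).deriv
    ring
  have w2 : deriv^[2] (wDS ψ φ) = fun x => φ x * deriv^[3] ψ x + deriv φ x * deriv^[2] ψ x
      - deriv^[2] φ x * deriv ψ x - deriv^[3] φ x * ψ x := by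
    rw [Function.iterate_succ_apply', Function.iterate_one, w1]
    funext x
    refine ((((a0 x).mul (b2 x)).sub ((a2 x).mul (b0 x))).congr_deriv ?_).deriv
    ring
  -- `φψ⁽⁴⁾ - φ⁽⁴⁾ψ = 2uw' + 2u'w`: the zeroth-order terms of the equation cancel.
  have w3 : deriv^[3] (wDS ψ φ) = fun x =>
      2 * (u x * (φ x * deriv^[2] ψ x - deriv^[2] φ x * ψ x))
        + 2 * (deriv u x * (φ x * deriv ψ x - deriv φ x * ψ x))
        + 2 * (deriv φ x * deriv^[3] ψ x - deriv^[3] φ x * deriv ψ x) := by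
    rw [Function.iterate_succ_apply', w2]
    funext x
    refine ((((((a0 x).mul (b3 x)).add ((a1 x).mul (b2 x))).sub ((a2 x).mul (b1 x))).sub
      ((a3 x).mul (b0 x))).congr_deriv ?_).deriv
    rw [heigψ x, heigφ x]
    ring
  have w4 : ∀ x, deriv^[4] (wDS ψ φ) x =
      2 * (deriv u x * (φ x * deriv^[2] ψ x - deriv^[2] φ x * ψ x)
        + u x * (φ x * deriv^[3] ψ x + deriv φ x * deriv^[2] ψ x
          - deriv^[2] φ x * deriv ψ x - deriv^[3] φ x * ψ x))
        + 2 * (deriv^[2] u x * (φ x * deriv ψ x - deriv φ x * ψ x)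
          + deriv u x * (φ x * deriv^[2] ψ x - deriv^[2] φ x * ψ x))
        + 2 * (deriv^[2] φ x * deriv^[3] ψ x - deriv^[3] φ x * deriv^[2] ψ x
          + (deriv φ x * deriv^[4] ψ x - deriv^[4] φ x * deriv ψ x)) := by
    intro x
    rw [Function.iterate_succ_apply', w3]
    refine ((((((u0 x).mul (((a0 x).mul (b2 x)).sub ((a2 x).mul (b0 x)))).const_mul 2).add
      (((u1 x).mul (((a0 x).mul (b1 x)).sub ((a1 x).mul (b0 x)))).const_mul 2)).add
      ((((a1 x).mul (b3 x)).sub ((a3 x).mul (b1 x))).const_mul 2)).congr_deriv ?_).deriv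
    simp only [Pi.mul_apply, Pi.sub_apply]
    ring
  have g1 : deriv (gDS ψ φ) = fun x => deriv φ x * ψ x + φ x * deriv ψ x := by
    funext x
    exact ((a0 x).mul (b0 x)).deriv
  have g2 : ∀ x, deriv^[2] (gDS ψ φ) x =
      deriv^[2] φ x * ψ x + 2 * (deriv φ x * deriv ψ x) + φ x * deriv^[2] ψ x := by
    intro x
    rw [Function.iterate_succ_apply', Function.iterate_one, g1]
    refine ((((a1 x).mul (b0 x)).add ((a0 x).mul (b1 x))).congr_deriv ?_).deriv
    ring
  refine ⟨fun x => ?_, fun x hg => ?_⟩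
  · rw [w4, w3, w2, w1, heigψ x, heigφ x]
    simp only [wDS, dDS]
    ring
  · rw [g2, g1, w2, w1]
    simp only [wDS, dDS, gDS] at hg ⊢
    have hφ0 : φ x ≠ 0 := left_ne_zero_of_mul hg
    have hψ0 : ψ x ≠ 0 := right_ne_zero_of_mul hg
    field_simp
    ring
end
end
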